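/- arXiv:1708.05017 — 2 statements merged into one kernel-verified Lean document; each statement's English description precedes it below -/
import Mathlib

section
/- Let X₁, …, Xₙ be identically distributed ℝ²-valued random variables with common law μ, and for h > 0 define the kernel density estimator p̂_h(x) = (1/(n·h²))·Σᵢ K(‖x − Xᵢ‖/h). Then for every x ∈ A ∪ R, the expectation E[p̂_h(x)] → ∞ as h → 0⁺. (That is, the kernel density estimator diverges in expectation at every anchor point and at every point on a road.) -/
/-!
Let `μ` be the law of the samples, and let the kernel be at least `κ > 0` on `[0, ρ]`. Keeping a
single sample, the expected estimator is at least `κ / (n h ^ d) * μ (closedBall x (ρ h))`, so it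
blows up wherever `μ` charges small balls around `x` much more than `r ^ d`. At an anchor the mass
of a ball does not even tend to `0`. On a road it is at least linear in the radius: this holds for
Lebesgue measure on an interval, and pushing forward by a Lipschitz map only rescales the radius.
-/

open MeasureTheory Filter Metric Set Topology
open scoped ENNReal NNReal

section InfiniteDensity

variable {E F : Type*} [PseudoMetricSpace E] [MeasurableSpace E] [PseudoMetricSpace F]
  [MeasurableSpace F] {μ ν : Measure E} {d : ℕ} {x : E}

/-- The measure `μ` has infinite `d`-dimensional density at `x`: the ratio of `μ (closedBall x r)`
to `r ^ d` tends to `∞` as `r → 0⁺`. This is the local condition on the law of the samples that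
makes a kernel density estimator with normalization `h ^ d` diverge in expectation at `x`. The
volume of the unit ball is left out of the denominator. -/
def HasInfiniteDensityAt (μ : Measure E) (d : ℕ) (x : E) : Prop :=
  Tendsto (fun r : ℝ => μ (closedBall x r) / ENNReal.ofReal (r ^ d)) (𝓝[>] 0) (𝓝 ∞)

lemma hasInfiniteDensityAt_of_eventually_le {c : ℝ≥0∞} (hc : c ≠ 0) {s : ℕ} (hsd : s < d)
    (hμ : ∀ᶠ r : ℝ in 𝓝[>] 0, c * ENNReal.ofReal (r ^ s) ≤ μ (closedBall x r)) :
    HasInfiniteDensityAt μ d x := by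
  have hpow : Tendsto (fun r : ℝ => ENNReal.ofReal ((r ^ (d - s))⁻¹)) (𝓝[>] 0) (𝓝 ∞) := by
    simp only [← inv_pow]
    exact ENNReal.tendsto_ofReal_nhds_top.2
      ((tendsto_pow_atTop (Nat.sub_ne_zero_of_lt hsd)).comp tendsto_inv_nhdsGT_zero)
  have hlower := ENNReal.Tendsto.const_mul (a := c) hpow (.inl ENNReal.top_ne_zero)
  rw [ENNReal.mul_top hc] at hlower
  refine tendsto_nhds_top_mono hlower ?_
  filter_upwards [hμ, self_mem_nhdsWithin] with r hr (hr0 : 0 < r)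
  calc c * ENNReal.ofReal ((r ^ (d - s))⁻¹)
      = c * (ENNReal.ofReal (r ^ s) / ENNReal.ofReal (r ^ d)) := by
        rw [← ENNReal.ofReal_div_of_pos (by positivity), pow_sub₀ r hr0.ne' hsd.le, mul_inv_rev,
          inv_inv, div_eq_mul_inv]
    _ = c * ENNReal.ofReal (r ^ s) / ENNReal.ofReal (r ^ d) := (mul_div_assoc ..).symm
    _ ≤ μ (closedBall x r) / ENNReal.ofReal (r ^ d) := by gcongr

lemma hasInfiniteDensityAt_of_measure_singleton_ne_zero (hd : 0 < d) (hx : μ {x} ≠ 0) :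
    HasInfiniteDensityAt μ d x := by
  refine hasInfiniteDensityAt_of_eventually_le hx hd ?_
  filter_upwards [self_mem_nhdsWithin] with r (hr : 0 < r)
  rw [pow_zero, ENNReal.ofReal_one, mul_one]
  exact measure_mono (singleton_subset_iff.2 (mem_closedBall_self hr.le))

namespace HasInfiniteDensityAt

lemma mono (hμ : HasInfiniteDensityAt μ d x) (hμν : μ ≤ ν) : HasInfiniteDensityAt ν d x :=
  tendsto_nhds_top_mono' hμ fun _ => ENNReal.div_le_div_right (hμν _) _

lemma const_smul (hμ : HasInfiniteDensityAt μ d x) {c : ℝ≥0∞} (hc : c ≠ 0) :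
    HasInfiniteDensityAt (c • μ) d x := by
  have h := ENNReal.Tendsto.const_mul (a := c) hμ (.inl ENNReal.top_ne_zero)
  rw [ENNReal.mul_top hc] at h
  simpa only [HasInfiniteDensityAt, Measure.smul_apply, smul_eq_mul, mul_div_assoc] using h

lemma withDensity (hμ : HasInfiniteDensityAt μ d x) {f : E → ℝ≥0∞} {c : ℝ≥0∞} (hc : c ≠ 0)
    (hf : ∀ᵐ y ∂μ, c ≤ f y) : HasInfiniteDensityAt (μ.withDensity f) d x := by
  refine (hμ.const_smul hc).mono ?_
  rw [← withDensity_const]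
  exact withDensity_mono hf

lemma tendsto_closedBall_mul (hμ : HasInfiniteDensityAt μ d x) {c : ℝ} (hc : 0 < c) :
    Tendsto (fun r : ℝ => μ (closedBall x (c * r)) / ENNReal.ofReal (r ^ d)) (𝓝[>] 0) (𝓝 ∞) := by
  have hcd : ENNReal.ofReal (c ^ d) ≠ 0 := (ENNReal.ofReal_pos.2 (pow_pos hc d)).ne'
  have hscale : Tendsto (c * ·) (𝓝[>] 0) (𝓝[>] 0) :=
    tendsto_iff_comap.2 (comap_mulLeft_nhdsGT_zero hc).ge
  have h := ENNReal.Tendsto.const_mul (a := ENNReal.ofReal (c ^ d)) (Tendsto.comp hμ hscale)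
    (.inl ENNReal.top_ne_zero)
  rw [ENNReal.mul_top hcd] at h
  refine h.congr fun r => ?_
  rw [Function.comp_apply, mul_pow, ENNReal.ofReal_mul (pow_pos hc d).le, ← mul_div_assoc,
    ENNReal.mul_div_mul_left _ _ hcd ENNReal.ofReal_ne_top]

lemma map (hμ : HasInfiniteDensityAt μ d x) {g : E → F}
    (hg : AEMeasurable g μ) {C : ℝ} (hC : 0 < C)
    (hdist : ∀ᵐ y ∂μ, dist (g y) (g x) ≤ C * dist y x) :
    HasInfiniteDensityAt (μ.map g) d (g x) := by
  refine tendsto_nhds_top_mono' (hμ.tendsto_closedBall_mul (inv_pos.2 hC)) fun r => ?_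
  have hball : closedBall x (C⁻¹ * r) ≤ᵐ[μ] g ⁻¹' closedBall (g x) r := by
    filter_upwards [hdist] with y hy hyx
    exact hy.trans ((le_inv_mul_iff₀ hC).1 hyx)
  gcongr
  exact (measure_mono_ae hball).trans (Measure.le_map_apply hg _)

end HasInfiniteDensityAt

lemma ofReal_le_volume_closedBall_inter_Icc {a b t r : ℝ} (ht : t ∈ Icc a b) (hr : 0 ≤ r)
    (hrab : r ≤ b - a) : ENNReal.ofReal r ≤ volume (closedBall t r ∩ Icc a b) := by
  rw [Real.closedBall_eq_Icc, Icc_inter_Icc, Real.volume_Icc]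
  refine ENNReal.ofReal_le_ofReal ?_
  grind

lemma hasInfiniteDensityAt_volume_restrict_Icc {a b t : ℝ} (hab : a < b) (ht : t ∈ Icc a b)
    (hd : 1 < d) : HasInfiniteDensityAt (volume.restrict (Icc a b)) d t := by
  refine hasInfiniteDensityAt_of_eventually_le one_ne_zero hd ?_
  filter_upwards [Ioc_mem_nhdsGT (sub_pos.2 hab)] with r hr
  rw [one_mul, pow_one, Measure.restrict_apply measurableSet_closedBall]
  exact ofReal_le_volume_closedBall_inter_Icc ht hr.1.le hr.2

lemma hasInfiniteDensityAt_map_withDensity_of_lipschitzOnWith [BorelSpace E] {a b t : ℝ}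
    (hab : a < b) (ht : t ∈ Icc a b) (hd : 1 < d) {γ : ℝ → E} {L : ℝ≥0}
    (hγ : LipschitzOnWith L γ (Icc a b)) {f : ℝ → ℝ≥0∞} {c : ℝ≥0∞} (hc : c ≠ 0)
    (hf : ∀ s ∈ Icc a b, c ≤ f s) :
    HasInfiniteDensityAt (((volume.restrict (Icc a b)).withDensity f).map γ) d (γ t) := by
  have hac := withDensity_absolutelyContinuous (volume.restrict (Icc a b)) f
  have hdens := (hasInfiniteDensityAt_volume_restrict_Icc hab ht hd).withDensity hc
    (ae_restrict_of_forall_mem measurableSet_Icc hf)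
  have hmeas := (hγ.continuousOn.aemeasurable measurableSet_Icc).mono_ac hac
  have hLpos : (0 : ℝ) < (L + 1 : ℝ≥0) := by positivity
  refine hdens.map hmeas hLpos (hac.ae_le ?_)
  exact ae_restrict_of_forall_mem measurableSet_Icc fun s hs =>
    (hγ.weaken le_self_add).dist_le_mul s hs t ht

end InfiniteDensity

section KernelDensityEstimator

variable {E : Type*} [PseudoMetricSpace E] {d n : ℕ} {K : ℝ → ℝ} {κ ρ : ℝ} {i : Fin n} {x : E}

/-- The kernel density estimator `p̂_h(x) = (1 / (n h ^ d)) ∑ i, K (dist x (y i) / h)` of a sample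
`y` of size `n`, with kernel `K` and bandwidth `h`. The exponent `d` is a parameter, as the metric
space need not have a dimension. -/
noncomputable def kernelDensityEstimator (d : ℕ) (K : ℝ → ℝ) (h : ℝ) (y : Fin n → E) (x : E) : ℝ :=
  1 / (n * h ^ d) * ∑ i, K (dist x (y i) / h)

lemma le_kernelDensityEstimator (hK0 : ∀ t, 0 ≤ K t) (hKρ : ∀ t ∈ Icc 0 ρ, κ ≤ K t) {h : ℝ}
    (hh : 0 < h) {y : Fin n → E} (hy : y i ∈ closedBall x (ρ * h)) :
    κ / n / h ^ d ≤ kernelDensityEstimator d K h y x := by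
  have hle : dist x (y i) / h ≤ ρ := (div_le_iff₀ hh).2 (mem_closedBall'.1 hy)
  calc κ / n / h ^ d = 1 / (n * h ^ d) * κ := by rw [div_div, div_mul_eq_mul_div, one_mul]
    _ ≤ 1 / (n * h ^ d) * K (dist x (y i) / h) := by
      gcongr
      exact hKρ _ ⟨by positivity, hle⟩
    _ ≤ kernelDensityEstimator d K h y x := by
      unfold kernelDensityEstimator
      gcongr
      exact Finset.single_le_sum (f := fun i => K (dist x (y i) / h)) (fun _ _ => hK0 _)
        (Finset.mem_univ i)

variable {Ω : Type*} [MeasurableSpace Ω] [MeasurableSpace E] [OpensMeasurableSpace E]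
  {P : Measure Ω} {X : Fin n → Ω → E}

lemma mul_measure_closedBall_le_lintegral_kernelDensityEstimator
    (hK0 : ∀ t, 0 ≤ K t) (hKρ : ∀ t ∈ Icc 0 ρ, κ ≤ K t) (hX : AEMeasurable (X i) P) {h : ℝ}
    (hh : 0 < h) :
    ENNReal.ofReal (κ / n / h ^ d) * P.map (X i) (closedBall x (ρ * h)) ≤
      ∫⁻ ω, ENNReal.ofReal (kernelDensityEstimator d K h (X · ω) x) ∂P := by
  rw [Measure.map_apply_of_aemeasurable hX measurableSet_closedBall,
    ← lintegral_indicator_const₀ (hX.nullMeasurable measurableSet_closedBall)]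
  exact lintegral_mono (indicator_le fun ω hω =>
    ENNReal.ofReal_le_ofReal (le_kernelDensityEstimator hK0 hKρ hh hω))

theorem HasInfiniteDensityAt.tendsto_lintegral_kernelDensityEstimator
    (hdens : HasInfiniteDensityAt (P.map (X i)) d x) (hX : AEMeasurable (X i) P)
    (hK0 : ∀ t, 0 ≤ K t) (hρ : 0 < ρ) (hκ : 0 < κ) (hKρ : ∀ t ∈ Icc 0 ρ, κ ≤ K t) :
    Tendsto (fun h : ℝ => ∫⁻ ω, ENNReal.ofReal (kernelDensityEstimator d K h (X · ω) x) ∂P)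
      (𝓝[>] 0) (𝓝 ∞) := by
  have hn : (0 : ℝ) < n := Nat.cast_pos.2 i.pos
  have hlower := ENNReal.Tendsto.const_mul (a := ENNReal.ofReal (κ / n))
    (hdens.tendsto_closedBall_mul hρ) (.inl ENNReal.top_ne_zero)
  rw [ENNReal.mul_top (ENNReal.ofReal_pos.2 (div_pos hκ hn)).ne'] at hlower
  refine tendsto_nhds_top_mono hlower ?_
  filter_upwards [self_mem_nhdsWithin] with h (hh : 0 < h)
  refine le_of_eq_of_le ?_
    (mul_measure_closedBall_le_lintegral_kernelDensityEstimator hK0 hKρ hX hh)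
  rw [ENNReal.ofReal_div_of_pos (pow_pos hh d), ← mul_div_assoc, ENNReal.mul_div_right_comm]

end KernelDensityEstimator

theorem kde_expectation_diverges_on_anchors_and_roads_general {E Ω ι : Type*}
    [PseudoMetricSpace E] [MeasurableSpace E] [BorelSpace E] [MeasurableSpace Ω]
    {d : ℕ} (hd : 1 < d) {A : Set E} {μ₀ : Measure E} (hμ₀ : ∀ a ∈ A, μ₀ {a} ≠ 0)
    {γ : ι → ℝ → E} {L : ι → ℝ≥0} (hγ : ∀ j, LipschitzOnWith (L j) (γ j) (Icc 0 1))
    {f : ι → ℝ → ℝ≥0∞} {c : ι → ℝ≥0∞} (hc : ∀ j, c j ≠ 0)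
    (hf : ∀ j, ∀ t ∈ Icc (0 : ℝ) 1, c j ≤ f j t) {π₀ π₁ : ℝ≥0∞} (hπ₀ : π₀ ≠ 0) (hπ₁ : π₁ ≠ 0)
    {K : ℝ → ℝ} (hK0 : ∀ t, 0 ≤ K t) {κ ρ : ℝ} (hρ : 0 < ρ) (hκ : 0 < κ)
    (hKρ : ∀ t ∈ Icc 0 ρ, κ ≤ K t) {P : Measure Ω} {n : ℕ} {X : Fin n → Ω → E} {i : Fin n}
    (hX : AEMeasurable (X i) P)
    (hlaw : π₀ • μ₀ + π₁ • Measure.sum (fun j =>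
      ((volume.restrict (Icc (0 : ℝ) 1)).withDensity (f j)).map (γ j)) ≤ P.map (X i))
    {x : E} (hx : x ∈ A ∪ ⋃ j, γ j '' Icc 0 1) :
    Tendsto (fun h : ℝ => ∫⁻ ω, ENNReal.ofReal (kernelDensityEstimator d K h (X · ω) x) ∂P)
      (𝓝[>] 0) (𝓝 ∞) := by
  suffices hdens : HasInfiniteDensityAt (P.map (X i)) d x from
    hdens.tendsto_lintegral_kernelDensityEstimator hX hK0 hρ hκ hKρ
  rcases hx with hanchor | hroad
  · have hatom := hasInfiniteDensityAt_of_measure_singleton_ne_zero (zero_lt_one.trans hd)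
      (hμ₀ x hanchor)
    exact (hatom.const_smul hπ₀).mono ((Measure.le_add_right le_rfl).trans hlaw)
  · obtain ⟨j, t, ht, rfl⟩ := mem_iUnion.1 hroad
    have hcurve := hasInfiniteDensityAt_map_withDensity_of_lipschitzOnWith zero_lt_one ht hd (hγ j)
      (hc j) (hf j)
    have hroads := hcurve.mono (Measure.le_sum
      (fun j => ((volume.restrict (Icc (0 : ℝ) 1)).withDensity (f j)).map (γ j)) j)
    exact (hroads.const_smul hπ₁).mono ((Measure.le_add_left le_rfl).trans hlaw)

/-- for identically distributed samples `X₁, …, Xₙ` with law `μ` and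
the KDE `p̂_h(x) = (1/(n·h²))·Σᵢ K(‖x − Xᵢ‖/h)`, the expectation `E[p̂_h(x)]`
diverges as `h → 0⁺` at every `x ∈ A ∪ R`. -/
theorem kde_expectation_diverges_on_anchors_and_roads
    (a₀ A₀ c L π₀ π₁ π₂ : ℝ)
    (ha₀ : 0 < a₀) (ha₀A₀ : a₀ ≤ A₀) (hc : 0 < c) (hcL : c ≤ L)
    (hπ₀ : 0 < π₀) (hπ₁ : 0 < π₁) (hπ₂ : 0 < π₂) (hπsum : π₀ + π₁ + π₂ = 1)
    (A : Set (EuclideanSpace ℝ (Fin 2))) (hAfin : A.Finite) (hAne : A.Nonempty)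
    (μ₀ : Measure (EuclideanSpace ℝ (Fin 2))) [IsProbabilityMeasure μ₀]
    (hμ₀supp : μ₀ Aᶜ = 0)
    (hμ₀atom : ∀ a ∈ A, ENNReal.ofReal a₀ ≤ μ₀ {a})
    (k : ℕ) (γ : Fin k → ℝ → EuclideanSpace ℝ (Fin 2))
    (hγmeas : ∀ j, Measurable (γ j))
    (hγlow : ∀ j, ∀ s ∈ Icc (0:ℝ) 1, ∀ t ∈ Icc (0:ℝ) 1, c * |s - t| ≤ ‖γ j s - γ j t‖)
    (hγup : ∀ j, ∀ s ∈ Icc (0:ℝ) 1, ∀ t ∈ Icc (0:ℝ) 1, ‖γ j s - γ j t‖ ≤ L * |s - t|)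
    (R : Set (EuclideanSpace ℝ (Fin 2))) (hR : R = ⋃ j, γ j '' Icc (0:ℝ) 1)
    (hAR : A ⊆ R)
    (f : Fin k → ℝ → ℝ) (hfmeas : ∀ j, Measurable (f j))
    (hflow : ∀ j, ∀ t ∈ Icc (0:ℝ) 1, a₀ ≤ f j t)
    (hfup : ∀ j, ∀ t ∈ Icc (0:ℝ) 1, f j t ≤ A₀)
    (μ₁ : Measure (EuclideanSpace ℝ (Fin 2))) [IsProbabilityMeasure μ₁]
    (hμ₁ : μ₁ = ∑ j : Fin k, Measure.map (γ j)
      ((volume.restrict (Icc (0:ℝ) 1)).withDensity fun t => ENNReal.ofReal (f j t)))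
    (p₂ : EuclideanSpace ℝ (Fin 2) → ℝ) (hp₂meas : Measurable p₂)
    (hp₂low : ∀ x, 0 ≤ p₂ x) (hp₂up : ∀ x, p₂ x ≤ A₀)
    (μ₂ : Measure (EuclideanSpace ℝ (Fin 2))) [IsProbabilityMeasure μ₂]
    (hμ₂ : μ₂ = volume.withDensity fun x => ENNReal.ofReal (p₂ x))
    (μ : Measure (EuclideanSpace ℝ (Fin 2)))
    (hμ : μ = ENNReal.ofReal π₀ • μ₀ + ENNReal.ofReal π₁ • μ₁ + ENNReal.ofReal π₂ • μ₂)
    (K : ℝ → ℝ) (hK0 : ∀ t, 0 ≤ K t)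
    (hKmono : ∀ s ∈ Icc (0:ℝ) 1, ∀ t ∈ Icc (0:ℝ) 1, s ≤ t → K t ≤ K s)
    (hK1 : ∀ t : ℝ, 1 < t → K t = 0) (hKhalf : 0 < K (1/2))
    {Ω : Type*} [MeasurableSpace Ω] (P : Measure Ω) [IsProbabilityMeasure P]
    (n : ℕ) (hn : 0 < n)
    (X : Fin n → Ω → EuclideanSpace ℝ (Fin 2))
    (hXmeas : ∀ i, Measurable (X i))
    (hXlaw : ∀ i, Measure.map (X i) P = μ)
    (x : EuclideanSpace ℝ (Fin 2)) (hx : x ∈ A ∪ R) :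
    Tendsto (fun h : ℝ =>
        ∫⁻ ω, ENNReal.ofReal ((1 / (n * h ^ 2)) * ∑ i : Fin n, K (‖x - X i ω‖ / h)) ∂P)
      (𝓝[>] (0:ℝ)) (𝓝 ⊤) := by
  have hγ j : LipschitzOnWith L.toNNReal (γ j) (Icc 0 1) := .of_dist_le_mul fun s hs t ht => by
    rw [Real.coe_toNNReal L (hc.le.trans hcL), dist_eq_norm, Real.dist_eq]
    exact hγup j s hs t ht
  have hK t (ht : t ∈ Icc (0 : ℝ) (1 / 2)) : K (1 / 2) ≤ K t :=
    hKmono t ⟨ht.1, by linarith [ht.2]⟩ _ (by norm_num) ht.2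
  have hlaw : ENNReal.ofReal π₀ • μ₀ + ENNReal.ofReal π₁ • Measure.sum (fun j =>
      ((volume.restrict (Icc (0 : ℝ) 1)).withDensity fun t => ENNReal.ofReal (f j t)).map (γ j)) ≤
      P.map (X ⟨0, hn⟩) := by
    rw [Measure.sum_fintype, ← hμ₁, hXlaw, hμ]
    exact Measure.le_add_right le_rfl
  have ha₀pos : 0 < ENNReal.ofReal a₀ := ENNReal.ofReal_pos.2 ha₀
  simpa only [kernelDensityEstimator, dist_eq_norm] using
    kde_expectation_diverges_on_anchors_and_roads_general one_lt_two
      (fun a ha => (ha₀pos.trans_le (hμ₀atom a ha)).ne') hγ (fun _ => ha₀pos.ne')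
      (fun j t ht => ENNReal.ofReal_le_ofReal (hflow j t ht)) (ENNReal.ofReal_pos.2 hπ₀).ne'
      (ENNReal.ofReal_pos.2 hπ₁).ne' hK0 one_half_pos hKhalf hK (hXmeas _).aemeasurable hlaw
      (hR ▸ hx)
end

section
/- Let L > 0 and let γ : [0,1] → ℝ² be L-Lipschitz. Then for every h ∈ (0, 1], the Lebesgue measure of the h-neighborhood of the curve satisfies vol({y ∈ ℝ² : dist(y, γ([0,1])) ≤ h}) ≤ 4π·(L + 2)·h. -/
open MeasureTheory Filter Metric Set Topology

open scoped NNReal ENNReal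

/-!
Cut `[0, 1]` into `n = ⌊L / (2 h)⌋ + 1` equal intervals. Their midpoints are `1 / (2 n)`-dense, and
`L / (2 n) ≤ h`, so the images of the midpoints under `γ` form an `h`-net of the curve. The discs of
radius `2 h` about these `n` points therefore cover the `h`-neighborhood, and their total area is
`4 π h² n ≤ 2 π (L + 2 h) h`.
-/

section CoveringNumber

variable {X Y : Type*} [PseudoEMetricSpace X] [PseudoEMetricSpace Y]

theorem coveringNumber_union_le (ε : ℝ≥0) (s t : Set X) :
    coveringNumber ε (s ∪ t) ≤ coveringNumber ε s + coveringNumber ε t := by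
  by_cases hs : coveringNumber ε s = ⊤
  · simp [hs]
  by_cases ht : coveringNumber ε t = ⊤
  · simp [ht]
  have hcover : IsCover ε (s ∪ t) (minimalCover ε s ∪ minimalCover ε t) := by
    rintro x (hx | hx)
    · exact (isCover_minimalCover hs).mono subset_union_left hx
    · exact (isCover_minimalCover ht).mono subset_union_right hx
  calc coveringNumber ε (s ∪ t)
      ≤ (minimalCover ε s ∪ minimalCover ε t).encard :=
        hcover.coveringNumber_le_encard (union_subset_union minimalCover_subset minimalCover_subset)
    _ ≤ (minimalCover ε s).encard + (minimalCover ε t).encard := encard_union_le _ _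
    _ = coveringNumber ε s + coveringNumber ε t := by
        rw [encard_minimalCover hs, encard_minimalCover ht]

theorem isCover_image_of_lipschitzOnWith {f : X → Y} {s t : Set X} {K ε : ℝ≥0}
    (hf : LipschitzOnWith K f s) (hts : t ⊆ s) (ht : IsCover ε s t) :
    IsCover (K * ε) (f '' s) (f '' t) := by
  rintro _ ⟨x, hx, rfl⟩
  obtain ⟨y, hy, hxy : edist x y ≤ ε⟩ := ht hx
  refine ⟨f y, mem_image_of_mem f hy, ?_⟩
  calc edist (f x) (f y) ≤ K * edist x y := hf hx (hts hy)
    _ ≤ K * ε := by gcongr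
    _ = ↑(K * ε) := (ENNReal.coe_mul K ε).symm

theorem coveringNumber_image_le_of_lipschitzOnWith {f : X → Y} {s : Set X} {K : ℝ≥0}
    (hf : LipschitzOnWith K f s) (ε : ℝ≥0) :
    coveringNumber (K * ε) (f '' s) ≤ coveringNumber ε s := by
  by_cases hs : coveringNumber ε s = ⊤
  · simp [hs]
  calc coveringNumber (K * ε) (f '' s)
      ≤ (f '' minimalCover ε s).encard :=
        (isCover_image_of_lipschitzOnWith hf minimalCover_subset
          (isCover_minimalCover hs)).coveringNumber_le_encard (image_mono minimalCover_subset)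
    _ ≤ (minimalCover ε s).encard := encard_image_le f _
    _ = coveringNumber ε s := encard_minimalCover hs

theorem coveringNumber_Icc_le_one {a b : ℝ} {ε : ℝ≥0} (h : b - a ≤ 2 * ε) :
    coveringNumber ε (Icc a b) ≤ 1 := by
  rcases lt_or_ge b a with hab | hab
  · simp [Icc_eq_empty_of_lt hab]
  have hcover : IsCover ε (Icc a b) {(a + b) / 2} := by
    rw [isCover_iff_subset_iUnion_closedBall, biUnion_singleton, Real.closedBall_eq_Icc]
    exact Icc_subset_Icc (by linarith) (by linarith)
  have hmid : (a + b) / 2 ∈ Icc a b := ⟨by linarith, by linarith⟩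
  simpa only [encard_singleton] using
    hcover.coveringNumber_le_encard (singleton_subset_iff.2 hmid)

theorem coveringNumber_Icc_le {a b : ℝ} {ε : ℝ≥0} {n : ℕ} (hn : 1 ≤ n)
    (h : b - a ≤ 2 * n * ε) : coveringNumber ε (Icc a b) ≤ n := by
  induction n, hn using Nat.le_induction generalizing a with
  | base => exact_mod_cast coveringNumber_Icc_le_one (by simpa only [Nat.cast_one, mul_one] using h)
  | succ n _ ih =>
    push_cast at h ⊢
    rcases le_total (a + 2 * ε) b with hb | hb
    · calc coveringNumber ε (Icc a b)
          = coveringNumber ε (Icc (a + 2 * ε) b ∪ Icc a (a + 2 * ε)) := by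
            rw [union_comm, Icc_union_Icc_eq_Icc (by simp) hb]
        _ ≤ coveringNumber ε (Icc (a + 2 * ε) b) + coveringNumber ε (Icc a (a + 2 * ε)) :=
            coveringNumber_union_le _ _ _
        _ ≤ n + 1 := add_le_add (ih (by linarith)) (coveringNumber_Icc_le_one (by simp))
    · exact (coveringNumber_Icc_le_one (by linarith)).trans le_add_self

theorem coveringNumber_image_Icc_le {γ : ℝ → X} {K ε : ℝ≥0} {a b : ℝ}
    (hγ : LipschitzOnWith K γ (Icc a b)) (hε : ε ≠ 0) :
    coveringNumber ε (γ '' Icc a b) ≤ (⌊K * (b - a) / (2 * ε)⌋₊ + 1 : ℕ) := by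
  set n : ℕ := ⌊K * (b - a) / (2 * ε)⌋₊ + 1
  have hε_pos : (0 : ℝ) < ε := by positivity
  have hlength : K * (b - a) ≤ 2 * n * ε := by
    have hfloor : K * (b - a) / (2 * ε) < n := by
      exact_mod_cast Nat.lt_floor_add_one (K * (b - a) / (2 * ε))
    rw [div_lt_iff₀ (by positivity)] at hfloor
    linarith
  let η : ℝ≥0 := ((b - a) / (2 * n)).toNNReal
  have hmesh : b - a ≤ 2 * n * η := by
    rw [← div_le_iff₀' (by positivity)]
    exact Real.le_coe_toNNReal _
  have hKη : K * η ≤ ε := by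
    rw [← NNReal.coe_le_coe, NNReal.coe_mul, Real.coe_toNNReal', mul_max_of_nonneg _ _ K.coe_nonneg,
      mul_zero, ← mul_div_assoc]
    exact max_le ((div_le_iff₀' (by positivity)).2 hlength) hε_pos.le
  calc coveringNumber ε (γ '' Icc a b)
      ≤ coveringNumber (K * η) (γ '' Icc a b) := coveringNumber_anti hKη
    _ ≤ coveringNumber η (Icc a b) := coveringNumber_image_le_of_lipschitzOnWith hγ η
    _ ≤ n := coveringNumber_Icc_le (Nat.le_add_left 1 _) hmesh

end CoveringNumber

section Thickening

variable {X : Type*} [PseudoMetricSpace X]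

theorem setOf_infDist_le_eq_cthickening {s : Set X} (hs : s.Nonempty) {δ : ℝ} (hδ : 0 ≤ δ) :
    {x | infDist x s ≤ δ} = cthickening δ s := by
  ext x
  exact (ENNReal.le_ofReal_iff_toReal_le (infEDist_ne_top hs) hδ).symm

theorem cthickening_subset_biUnion_closedBall_of_isCover {s t : Set X} {ε : ℝ≥0} {δ : ℝ}
    (ht : IsCompact t) (hst : IsCover ε s t) (hδ : 0 ≤ δ) :
    cthickening δ s ⊆ ⋃ x ∈ t, closedBall x (δ + ε) := by
  have hs : s ⊆ cthickening ε t :=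
    hst.subset_iUnion_closedBall.trans (ht.cthickening_eq_biUnion_closedBall ε.coe_nonneg).ge
  calc cthickening δ s ⊆ cthickening δ (cthickening ε t) := cthickening_subset_of_subset δ hs
    _ ⊆ cthickening (δ + ε) t := cthickening_cthickening_subset hδ ε.coe_nonneg t
    _ = ⋃ x ∈ t, closedBall x (δ + ε) :=
        ht.cthickening_eq_biUnion_closedBall (add_nonneg hδ ε.coe_nonneg)

variable [MeasurableSpace X] {μ : Measure X} {C : ℝ≥0∞} {ε : ℝ≥0} {δ : ℝ}

theorem measure_cthickening_le_coveringNumber_mul {s : Set X} (hs : coveringNumber ε s ≠ ⊤)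
    (hδ : 0 ≤ δ) (hC : ∀ x ∈ s, μ (closedBall x (δ + ε)) ≤ C) :
    μ (cthickening δ s) ≤ coveringNumber ε s * C := by
  obtain ⟨t, hts, ht, hcover, hcard⟩ := exists_set_encard_eq_coveringNumber hs
  lift t to Finset X using ht
  calc μ (cthickening δ s)
      ≤ μ (⋃ x ∈ t, closedBall x (δ + ε)) :=
        measure_mono
          (cthickening_subset_biUnion_closedBall_of_isCover t.finite_toSet.isCompact hcover hδ)
    _ ≤ ∑ x ∈ t, μ (closedBall x (δ + ε)) := measure_biUnion_finset_le _ _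
    _ ≤ t.card • C := Finset.sum_le_card_nsmul _ _ _ fun x hx ↦ hC x (hts hx)
    _ = coveringNumber ε s * C := by
        rw [← hcard, encard_coe_eq_coe_finsetCard, ENat.toENNReal_coe, nsmul_eq_mul]

theorem measure_cthickening_image_Icc_le {γ : ℝ → X} {K : ℝ≥0} {a b : ℝ}
    (hγ : LipschitzOnWith K γ (Icc a b)) (hε : ε ≠ 0) (hδ : 0 ≤ δ)
    (hC : ∀ x ∈ γ '' Icc a b, μ (closedBall x (δ + ε)) ≤ C) :
    μ (cthickening δ (γ '' Icc a b)) ≤ (⌊K * (b - a) / (2 * ε)⌋₊ + 1 : ℕ) * C := by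
  have hcard := coveringNumber_image_Icc_le hγ hε
  calc μ (cthickening δ (γ '' Icc a b))
      ≤ coveringNumber ε (γ '' Icc a b) * C :=
        measure_cthickening_le_coveringNumber_mul
          (ne_top_of_le_ne_top (ENat.natCast_ne_top _) hcard) hδ hC
    _ ≤ (⌊K * (b - a) / (2 * ε)⌋₊ + 1 : ℕ) * C := by
        gcongr
        exact_mod_cast ENat.toENNReal_mono hcard

end Thickening

theorem volume_closedBall_fin_two_eq_ofReal (x : EuclideanSpace ℝ (Fin 2)) {r : ℝ} (hr : 0 ≤ r) :
    volume (closedBall x r) = ENNReal.ofReal (Real.pi * r ^ 2) := by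
  rw [EuclideanSpace.volume_closedBall_fin_two, mul_comm Real.pi, ENNReal.ofReal_mul (sq_nonneg r),
    ENNReal.ofReal_pow hr]

theorem volume_neighborhood_lipschitz_curve_le_general {γ : ℝ → EuclideanSpace ℝ (Fin 2)}
    {K : ℝ≥0} {a b : ℝ} (hab : a ≤ b) (hγ : LipschitzOnWith K γ (Icc a b)) {h : ℝ} (hh : 0 < h) :
    volume {y | infDist y (γ '' Icc a b) ≤ h} ≤
      ENNReal.ofReal (2 * Real.pi * (K * (b - a) + 2 * h) * h) := by
  lift h to ℝ≥0 using hh.le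
  have hK : 0 ≤ K * (b - a) := mul_nonneg K.coe_nonneg (sub_nonneg.2 hab)
  rw [setOf_infDist_le_eq_cthickening ((nonempty_Icc.2 hab).image γ) hh.le]
  calc volume (cthickening h (γ '' Icc a b))
      ≤ (⌊K * (b - a) / (2 * h)⌋₊ + 1 : ℕ) * ENNReal.ofReal (Real.pi * (h + h) ^ 2) :=
        measure_cthickening_image_Icc_le hγ (NNReal.coe_pos.1 hh).ne' hh.le fun x _ ↦
          (volume_closedBall_fin_two_eq_ofReal x (by positivity)).le
    _ = ENNReal.ofReal ((⌊K * (b - a) / (2 * h)⌋₊ + 1) * (Real.pi * (h + h) ^ 2)) := by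
        rw [← Nat.cast_add_one, ENNReal.ofReal_mul (Nat.cast_nonneg _), ENNReal.ofReal_natCast]
    _ ≤ ENNReal.ofReal ((K * (b - a) / (2 * h) + 1) * (Real.pi * (h + h) ^ 2)) := by
        gcongr
        exact Nat.floor_le (by positivity)
    _ = ENNReal.ofReal (2 * Real.pi * (K * (b - a) + 2 * h) * h) := by
        congr 1
        field_simp
        ring

/-- for an `L`-Lipschitz curve `γ : [0,1] → ℝ²` and `0 < h ≤ 1`, the
Lebesgue measure of the `h`-neighborhood of the curve is at most `4π·(L+2)·h`. -/
theorem volume_neighborhood_lipschitz_curve_le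
    (L : ℝ) (hL : 0 < L)
    (γ : ℝ → EuclideanSpace ℝ (Fin 2))
    (hγ : LipschitzOnWith (Real.toNNReal L) γ (Icc 0 1)) :
    ∀ h : ℝ, 0 < h → h ≤ 1 →
      volume {y : EuclideanSpace ℝ (Fin 2) | infDist y (γ '' Icc (0:ℝ) 1) ≤ h} ≤
        ENNReal.ofReal (4 * Real.pi * (L + 2) * h) := by
  intro h hh hh1
  refine (volume_neighborhood_lipschitz_curve_le_general zero_le_one hγ hh).trans ?_
  rw [Real.coe_toNNReal L hL.le]
  apply ENNReal.ofReal_le_ofReal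
  calc 2 * Real.pi * (L * (1 - 0) + 2 * h) * h ≤ 2 * Real.pi * (2 * (L + 2)) * h := by
        gcongr
        linarith
    _ = 4 * Real.pi * (L + 2) * h := by ring
end
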